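/- arXiv:1809.09286 — 2 statements merged into one kernel-verified Lean document; each statement's English description precedes it below -/
import Mathlib

section
/- The ℤ-submodule of ℂ⁶ generated by {ξ₁′, ξ₂′, ξ₃′, ξ₅′, ξ₆′} is a free ℤ-module of rank 5 and is a direct summand of the ℤ-submodule of ℂ⁶ generated by {η₁, η₂, η₃, η₄, η₅, η₆, η₇, η₈, η₉}. -/
open Complex

/-- The basis vectors `η₁, …, η₉` of the range of the Chern–Connes character `𝐓₄`. -/
noncomputable def η (θ : ℝ) : Fin 9 → Fin 6 → ℂ :=
  ![![1/2, 0, 0, 1/2, 0, 0],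
    ![1/2, (1 - I)/4, 0, 0, 0, 0],
    ![1/4, 1/4, 0, 1/4, 0, 0],
    ![1/2, 0, 0, 0, 1/2, 0],
    ![1/2, 0, (1 - I)/4, 0, 0, 0],
    ![1/4, 0, 1/4, 0, 1/4, 0],
    ![(θ : ℂ)/4, (1 + I)/8, (1 + I)/8, 1/8, 1/8, 1/4],
    ![(θ : ℂ)/4, (-1 + I)/8, (-1 + I)/8, -(1/8), -(1/8), -(1/4)],
    ![(θ : ℂ)/4, (-1 - I)/8, (-1 - I)/8, 1/8, 1/8, 1/4]]

/-- The images `ξ₁′, …, ξ₆′` of the generators of `K₀(A_θ ⋊ ℤ₂)` under `𝐓₄ ∘ ι⋆`. -/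
noncomputable def ξ' (θ : ℝ) : Fin 6 → Fin 6 → ℂ :=
  ![![1, 0, 0, 0, 0, 0],
    ![1/2, 0, 0, 1/2, 0, 0],
    ![1/2, 0, 0, 0, 0, 1/2],
    ![1/2, 0, 0, 0, 0, 1/2],
    ![1/2, 0, 0, 0, 1/2, 0],
    ![(θ : ℂ)/2, 0, 0, 1/4, -(1/4), 0]]

/-!
The projection of `ℂ⁶` onto its second and third coordinates kills every `ξᵢ′`, while it maps
`η₂, η₃, η₆, η₇` to independent vectors of `ℂ²`, so the span of these four meets the span of the
`ξᵢ′` trivially. Five integral relations, solvable for `η₁, η₄, η₅, η₈, η₉`, show that together the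
two spans exhaust the lattice of the `η`'s. The irrationality of `θ` gives the rank: it separates
the first coordinates `1` and `θ / 2` of `ξ₁′` and `ξ₆′`.
-/

/-- The family `ξ₁′, ξ₂′, ξ₃′, ξ₅′, ξ₆′` of distinct images, indexed from `0`; it will be a basis of
the direct summand. -/
noncomputable def ξBasis (θ : ℝ) : Fin 5 → Fin 6 → ℂ := ξ' θ ∘ ![0, 1, 2, 4, 5]

/-- The family `η₂, η₃, η₆, η₇`, whose span is the complement of the span of `ξBasis`. -/
noncomputable def ηComplement (θ : ℝ) : Fin 4 → Fin 6 → ℂ := η θ ∘ ![1, 2, 5, 6]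

/-- The projection `ℂ⁶ → ℂ²` onto the second and third coordinates, which separates
`ηComplement` from `ξBasis`. -/
def middleProj : (Fin 6 → ℂ) →ₗ[ℤ] (Fin 2 → ℂ) := LinearMap.funLeft ℤ ℂ ![1, 2]

theorem range_ξBasis (θ : ℝ) :
    Set.range (ξBasis θ) = {ξ' θ 0, ξ' θ 1, ξ' θ 2, ξ' θ 4, ξ' θ 5} := by
  simp only [ξBasis, Set.range_comp, Matrix.range_cons, Matrix.range_empty, Set.union_empty,
    Set.singleton_union, Set.image_insert_eq, Set.image_singleton]

section Independence

theorem intCast_add_intCast_mul_eq_zero_iff {x : ℝ} (hx : Irrational x) {a b : ℤ} :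
    (a : ℝ) + b * x = 0 ↔ a = 0 ∧ b = 0 := by
  refine ⟨fun h => ?_, fun ⟨ha, hb⟩ => by simp [ha, hb]⟩
  have hb : b = 0 := by
    by_contra hb
    refine (hx.intCast_mul hb).ne_int (-a) ?_
    push_cast
    linarith
  exact ⟨by simpa [hb] using h, hb⟩

theorem linearIndependent_ξBasis {θ : ℝ} (hθ : Irrational θ) :
    LinearIndependent ℤ (ξBasis θ) := by
  rw [Fintype.linearIndependent_iff]
  intro g hg
  have coord (j : Fin 6) : (∑ i, g i • ξBasis θ i j).re = 0 := by
    simpa using congrArg re (congrFun hg j)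
  have coord₀ : (g 0 + g 1 / 2 + g 2 / 2 + g 3 / 2 + g 4 * (θ / 2) : ℝ) = 0 := by
    simpa [ξBasis, ξ', Fin.sum_univ_succ, div_eq_mul_inv, add_assoc] using coord 0
  have coord₃ : (g 1 / 2 + g 4 / 4 : ℝ) = 0 := by
    simpa [ξBasis, ξ', Fin.sum_univ_succ, div_eq_mul_inv] using coord 3
  have coord₄ : (g 3 / 2 - g 4 / 4 : ℝ) = 0 := by
    simpa [ξBasis, ξ', Fin.sum_univ_succ, div_eq_mul_inv, sub_eq_add_neg] using coord 4
  have g₂ : g 2 = 0 := by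
    simpa [ξBasis, ξ', Fin.sum_univ_succ] using coord 5
  obtain ⟨two_g₀, g₄⟩ : 2 * g 0 = 0 ∧ g 4 = 0 := by
    rw [← intCast_add_intCast_mul_eq_zero_iff hθ]
    simp only [g₂] at coord₀
    push_cast at coord₀ ⊢
    linarith
  have g₀ : g 0 = 0 := by lia
  have g₁ : g 1 = 0 := by simpa [g₄] using coord₃
  have g₃ : g 3 = 0 := by simpa [g₄] using coord₄
  intro i
  fin_cases i <;> assumption

theorem linearIndependent_middleProj_comp_ηComplement (θ : ℝ) :
    LinearIndependent ℤ (middleProj ∘ ηComplement θ) := by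
  rw [Fintype.linearIndependent_iff]
  intro g hg
  have re₀ : (g 0 / 4 + g 1 / 4 + g 3 / 8 : ℝ) = 0 := by
    simpa [middleProj, ηComplement, η, LinearMap.funLeft_apply, Fin.sum_univ_succ,
      div_eq_mul_inv, add_assoc] using congrArg re (congrFun hg 0)
  have im₀ : (-g 0 / 4 + g 3 / 8 : ℝ) = 0 := by
    simpa [middleProj, ηComplement, η, LinearMap.funLeft_apply, Fin.sum_univ_succ,
      div_eq_mul_inv] using congrArg im (congrFun hg 0)
  have re₁ : (g 2 / 4 + g 3 / 8 : ℝ) = 0 := by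
    simpa [middleProj, ηComplement, η, LinearMap.funLeft_apply, Fin.sum_univ_succ,
      div_eq_mul_inv] using congrArg re (congrFun hg 1)
  have g₃ : g 3 = 0 := by
    simpa [middleProj, ηComplement, η, LinearMap.funLeft_apply, Fin.sum_univ_succ]
      using congrArg im (congrFun hg 1)
  have g₂ : g 2 = 0 := by simpa [g₃] using re₁
  have g₀ : g 0 = 0 := by simpa [g₃] using im₀
  have g₁ : g 1 = 0 := by simpa [g₀, g₃] using re₀
  intro i
  fin_cases i <;> assumption

theorem span_ξBasis_le_ker_middleProj (θ : ℝ) :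
    Submodule.span ℤ (Set.range (ξBasis θ)) ≤ LinearMap.ker middleProj := by
  rw [Submodule.span_le]
  rintro _ ⟨i, rfl⟩
  ext j
  fin_cases i <;> fin_cases j <;> simp [middleProj, ξBasis, ξ', LinearMap.funLeft_apply]

theorem disjoint_span_ξBasis_span_ηComplement (θ : ℝ) :
    Disjoint (Submodule.span ℤ (Set.range (ξBasis θ)))
      (Submodule.span ℤ (Set.range (ηComplement θ))) :=
  (Submodule.range_ker_disjoint (linearIndependent_middleProj_comp_ηComplement θ)).symm.mono_left
    (span_ξBasis_le_ker_middleProj θ)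

end Independence

section Generation

variable (θ : ℝ)

theorem ξ'_zero_eq :
    ξ' θ 0 = (η θ 0 + η θ 1 - 2 • η θ 2) + (η θ 3 + η θ 4 - 2 • η θ 5) + (η θ 6 - η θ 8) := by
  ext j
  fin_cases j <;> simp [ξ', η] <;> ring

theorem ξ'_one_eq : ξ' θ 1 = η θ 0 := rfl

theorem ξ'_two_eq : ξ' θ 2 = ξ' θ 0 - (η θ 2 + η θ 5) + (η θ 6 - η θ 7) := by
  ext j
  fin_cases j <;> simp [ξ', η] <;> ring

theorem ξ'_four_eq : ξ' θ 4 = η θ 3 := rfl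

theorem ξ'_five_eq : ξ' θ 5 = (η θ 2 + η θ 5) + (η θ 7 + η θ 8) - η θ 3 := by
  ext j
  fin_cases j <;> simp [ξ', η] <;> ring

theorem span_ξBasis_le_span_η :
    Submodule.span ℤ (Set.range (ξBasis θ)) ≤ Submodule.span ℤ (Set.range (η θ)) := by
  set L := Submodule.span ℤ (Set.range (η θ))
  have hη (i : Fin 9) : η θ i ∈ L := Submodule.subset_span ⟨i, rfl⟩
  have h₀ : ξ' θ 0 ∈ L := by
    rw [ξ'_zero_eq]
    apply_rules [add_mem, sub_mem, nsmul_mem]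
  have h₁ : ξ' θ 1 ∈ L := hη 0
  have h₂ : ξ' θ 2 ∈ L := by
    rw [ξ'_two_eq]
    apply_rules [add_mem, sub_mem]
  have h₄ : ξ' θ 4 ∈ L := hη 3
  have h₅ : ξ' θ 5 ∈ L := by
    rw [ξ'_five_eq]
    apply_rules [add_mem, sub_mem]
  rw [Submodule.span_le]
  rintro _ ⟨i, rfl⟩
  fin_cases i <;> assumption

theorem span_ηComplement_le_span_η :
    Submodule.span ℤ (Set.range (ηComplement θ)) ≤ Submodule.span ℤ (Set.range (η θ)) :=
  Submodule.span_mono (Set.range_comp_subset_range _ _)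

theorem span_η_le_span_ξBasis_sup_span_ηComplement :
    Submodule.span ℤ (Set.range (η θ)) ≤
      Submodule.span ℤ (Set.range (ξBasis θ)) ⊔ Submodule.span ℤ (Set.range (ηComplement θ)) := by
  set T := Submodule.span ℤ (Set.range (ξBasis θ)) ⊔ Submodule.span ℤ (Set.range (ηComplement θ))
  have hξ (i : Fin 5) : ξBasis θ i ∈ T :=
    Submodule.mem_sup_left (Submodule.subset_span ⟨i, rfl⟩)
  have hη (i : Fin 4) : ηComplement θ i ∈ T :=
    Submodule.mem_sup_right (Submodule.subset_span ⟨i, rfl⟩)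
  have h₁ : η θ 1 ∈ T := hη 0
  have h₂ : η θ 2 ∈ T := hη 1
  have h₅ : η θ 5 ∈ T := hη 2
  have h₆ : η θ 6 ∈ T := hη 3
  have h₀ : η θ 0 ∈ T := hξ 1
  have h₃ : η θ 3 ∈ T := hξ 3
  have h₇ : η θ 7 ∈ T := by
    have : η θ 7 = ξ' θ 0 - ξ' θ 2 - (η θ 2 + η θ 5) + η θ 6 := by rw [ξ'_two_eq]; abel
    rw [this]
    exact add_mem (sub_mem (sub_mem (hξ 0) (hξ 2)) (add_mem h₂ h₅)) h₆
  have h₈ : η θ 8 ∈ T := by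
    have : η θ 8 = ξ' θ 5 + η θ 3 - (η θ 2 + η θ 5) - η θ 7 := by rw [ξ'_five_eq]; abel
    rw [this]
    exact sub_mem (sub_mem (add_mem (hξ 4) h₃) (add_mem h₂ h₅)) h₇
  have h₄ : η θ 4 ∈ T := by
    have : η θ 4 = ξ' θ 0 - (η θ 0 + η θ 1 - 2 • η θ 2) - (η θ 6 - η θ 8) - η θ 3
        + 2 • η θ 5 := by
      rw [ξ'_zero_eq]; abel
    rw [this]
    have := hξ 0
    apply_rules [add_mem, sub_mem, nsmul_mem]
  rw [Submodule.span_le]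
  rintro _ ⟨i, rfl⟩
  fin_cases i <;> assumption

theorem span_ξBasis_sup_span_ηComplement :
    Submodule.span ℤ (Set.range (ξBasis θ)) ⊔ Submodule.span ℤ (Set.range (ηComplement θ)) =
      Submodule.span ℤ (Set.range (η θ)) :=
  (sup_le (span_ξBasis_le_span_η θ) (span_ηComplement_le_span_η θ)).antisymm
    (span_η_le_span_ξBasis_sup_span_ηComplement θ)

end Generation

/-- The ℤ-submodule of ℂ⁶ generated by `{ξ₁′, ξ₂′, ξ₃′, ξ₅′, ξ₆′}` is
free of rank 5 and is a direct summand of the ℤ-submodule generated by the `η`'s. -/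
theorem xi_span_free_and_direct_summand (θ : ℝ) (hθ : Irrational θ) :
    Module.Free ℤ (Submodule.span ℤ {ξ' θ 0, ξ' θ 1, ξ' θ 2, ξ' θ 4, ξ' θ 5}) ∧
    Module.finrank ℤ (Submodule.span ℤ {ξ' θ 0, ξ' θ 1, ξ' θ 2, ξ' θ 4, ξ' θ 5}) = 5 ∧
    Submodule.span ℤ {ξ' θ 0, ξ' θ 1, ξ' θ 2, ξ' θ 4, ξ' θ 5}
      ≤ Submodule.span ℤ (Set.range (η θ)) ∧
    ∃ P : Submodule ℤ (Fin 6 → ℂ),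
      P ≤ Submodule.span ℤ (Set.range (η θ)) ∧
      Submodule.span ℤ {ξ' θ 0, ξ' θ 1, ξ' θ 2, ξ' θ 4, ξ' θ 5} ⊓ P = ⊥ ∧
      Submodule.span ℤ {ξ' θ 0, ξ' θ 1, ξ' θ 2, ξ' θ 4, ξ' θ 5} ⊔ P
        = Submodule.span ℤ (Set.range (η θ)) := by
  have hξ := linearIndependent_ξBasis hθ
  rw [← range_ξBasis]
  exact ⟨.of_basis (.span hξ), finrank_span_eq_card hξ, span_ξBasis_le_span_η θ,
    Submodule.span ℤ (Set.range (ηComplement θ)), span_ηComplement_le_span_η θ,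
    (disjoint_span_ξBasis_span_ηComplement θ).eq_bot, span_ξBasis_sup_span_ηComplement θ⟩
end

section
/- The ℤ-submodule of ℂ⁶ generated by {ξ₁″, ξ₂″, ξ₃″, ξ₆″} is a free ℤ-module of rank 4 and is a direct summand of the ℤ-submodule of ℂ⁶ generated by {μ₁, μ₂, μ₃, μ₄, μ₅, μ₆, μ₇, μ₈, μ₉, μ₁₀}. -/
open Complex

/-- The sixth root of unity `ω = e^{πi/3} = (1 + i√3)/2`. -/
noncomputable def ω : ℂ := (1 + Real.sqrt 3 * I) / 2

/-- The basis vectors `μ₁, …, μ₁₀` of the range of the Chern–Connes character `𝐓₆`. -/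
noncomputable def μ (θ : ℝ) : Fin 10 → Fin 6 → ℂ :=
  ![![1, 0, 0, 0, 0, 0],
    ![1/6, 1/6, 1/6, 1/6, 1/6, 1/6],
    ![1/6, (1 - ω)/6, -ω/6, -ω/6, -(1/6), -(1/6)],
    ![1/6, -ω/6, (ω - 1)/6, (ω - 1)/6, 1/6, 1/6],
    ![1/6, -(1/6), 1/6, 1/6, -(1/6), -(1/6)],
    ![1/6, (ω - 1)/6, -ω/6, -ω/6, 1/6, 1/6],
    ![1/3, 0, 0, 1/3, 0, 0],
    ![1/3, 0, 0, -ω/3, 0, 0],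
    ![1/2, 0, 0, 0, 0, 1/2],
    ![(θ : ℂ)/6, ω/6, (1 + ω)/18, (1 + ω)/6, 1/12, 1/3]]

/-- The images `ξ₁″, …, ξ₆″` of the generators of `K₀(A_θ ⋊ ℤ₂)` under `𝐓₆ ∘ ι′⋆`. -/
noncomputable def ξ'' (θ : ℝ) : Fin 6 → Fin 6 → ℂ :=
  ![![1, 0, 0, 0, 0, 0],
    ![1/2, 0, 0, 0, 1/2, 1/2],
    ![1/2, 0, 0, 0, 0, 1/2],
    ![1/2, 0, 0, 0, 0, 1/2],
    ![1/2, 0, 0, 0, 0, 1/2],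
    ![(θ : ℂ)/2, 0, 0, 0, 1/4, 0]]

/-!
The projection of `ℂ⁶` to the second, third and fourth coordinates kills every `ξᵢ″`, while it maps
`μ₃, μ₄, μ₆, μ₇, μ₈, μ₁₀` to a `ℤ`-independent family, because `ω` is not rational. Hence the span
of these six vectors meets the span of the `ξᵢ″` trivially. It is a complement because modulo it
`ξ₁″, ξ₂″, ξ₃″, ξ₆″` are `μ₁, μ₂, μ₉, μ₅ - 2μ₉`, a unitriangular transform of the remaining
generators.
-/

open Submodule

lemma int_eq_zero_of_add_mul_eq_zero {K : Type*} [DivisionRing K] [CharZero K] {z : K}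
    (hz : z ∉ Set.range ((↑) : ℚ → K)) {m n : ℤ} (h : (m : K) + n * z = 0) :
    m = 0 ∧ n = 0 := by
  have hn : n = 0 := by
    by_contra hn
    have hz_eq : z = -m / n := by
      rw [eq_div_iff (Int.cast_ne_zero.mpr hn), ← Int.cast_comm]
      exact eq_neg_of_add_eq_zero_right h
    exact hz ⟨-m / n, by rw [hz_eq]; push_cast; rfl⟩
  subst hn
  exact ⟨by simpa using h, rfl⟩

lemma ofReal_notMem_range_ratCast {x : ℝ} (hx : Irrational x) :
    (x : ℂ) ∉ Set.range ((↑) : ℚ → ℂ) := by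
  rintro ⟨q, hq⟩
  exact hx ⟨q, by exact_mod_cast hq⟩

lemma omega_notMem_range_ratCast : ω ∉ Set.range ((↑) : ℚ → ℂ) := by
  rintro ⟨q, hq⟩
  have him : (q : ℂ).im = Real.sqrt 3 / 2 := by simp [hq, ω]
  rw [ratCast_im] at him
  exact (by positivity : (0 : ℝ) < Real.sqrt 3 / 2).ne him

/-- The generators `ξ₁″, ξ₂″, ξ₃″, ξ₆″` of the direct summand, as a family; the paper's indices
are one larger than those of `ξ''` and `μ`. -/
noncomputable def xiGenerators (θ : ℝ) : Fin 4 → Fin 6 → ℂ :=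
  ![ξ'' θ 0, ξ'' θ 1, ξ'' θ 2, ξ'' θ 5]

/-- The family `μ₃, μ₄, μ₆, μ₇, μ₈, μ₁₀`, which generates a complement of the span of
`xiGenerators` in the span of `μ`. -/
noncomputable def complementGenerators (θ : ℝ) : Fin 6 → Fin 6 → ℂ :=
  ![μ θ 2, μ θ 3, μ θ 5, μ θ 6, μ θ 7, μ θ 9]

/-- The projection of `ℂ⁶` to the coordinates on which every `ξᵢ″` vanishes. -/
def middleProjection : (Fin 6 → ℂ) →ₗ[ℤ] (Fin 3 → ℂ) :=
  LinearMap.funLeft ℤ ℂ ![1, 2, 3]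

lemma range_xiGenerators (θ : ℝ) :
    Set.range (xiGenerators θ) = {ξ'' θ 0, ξ'' θ 1, ξ'' θ 2, ξ'' θ 5} := by
  simp only [xiGenerators, Matrix.range_cons, Matrix.range_empty, Set.union_empty,
    Set.singleton_union]

lemma linearIndependent_xiGenerators {θ : ℝ} (hθ : Irrational θ) :
    LinearIndependent ℤ (xiGenerators θ) := by
  rw [Fintype.linearIndependent_iff]
  intro g hg
  have h₀ : (g 0 : ℂ) + (g 1 * 2⁻¹ + (g 2 * 2⁻¹ + g 3 * (θ / 2))) = 0 := by
    simpa [Fin.sum_univ_succ, xiGenerators, ξ''] using congrFun hg 0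
  have h₄ : (g 1 : ℂ) * 2⁻¹ + g 3 * 4⁻¹ = 0 := by
    simpa [Fin.sum_univ_succ, xiGenerators, ξ''] using congrFun hg 4
  have h₅ : (g 1 : ℂ) * 2⁻¹ + g 2 * 2⁻¹ = 0 := by
    simpa [Fin.sum_univ_succ, xiGenerators, ξ''] using congrFun hg 5
  obtain ⟨h₀₁, h₃⟩ : 2 * g 0 + g 1 + g 2 = 0 ∧ g 3 = 0 :=
    int_eq_zero_of_add_mul_eq_zero (ofReal_notMem_range_ratCast hθ)
      (by push_cast; linear_combination 2 * h₀)
  have h₁₃ : 2 * g 1 + g 3 = 0 := by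
    have : (2 * g 1 + g 3 : ℂ) = 0 := by linear_combination 4 * h₄
    exact_mod_cast this
  have h₁₂ : g 1 + g 2 = 0 := by
    have : (g 1 + g 2 : ℂ) = 0 := by linear_combination 2 * h₅
    exact_mod_cast this
  intro i
  fin_cases i <;> dsimp only [Fin.reduceFinMk] <;> omega

lemma linearIndependent_middleProjection_comp_complementGenerators (θ : ℝ) :
    LinearIndependent ℤ (middleProjection ∘ complementGenerators θ) := by
  rw [Fintype.linearIndependent_iff]
  intro f hf
  have h₁ : (f 0 : ℂ) * ((1 - ω) / 6) + (f 1 * (-ω / 6) + (f 2 * ((ω - 1) / 6)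
      + f 5 * (ω / 6))) = 0 := by
    simpa [Fin.sum_univ_succ, middleProjection, LinearMap.funLeft, complementGenerators, μ]
      using congrFun hf 0
  have h₂ : (f 0 : ℂ) * (-ω / 6) + (f 1 * ((ω - 1) / 6) + (f 2 * (-ω / 6)
      + f 5 * ((1 + ω) / 18))) = 0 := by
    simpa [Fin.sum_univ_succ, middleProjection, LinearMap.funLeft, complementGenerators, μ]
      using congrFun hf 1
  have h₃ : (f 0 : ℂ) * (-ω / 6) + (f 1 * ((ω - 1) / 6) + (f 2 * (-ω / 6)
      + (f 3 * 3⁻¹ + (f 4 * (-ω / 3) + f 5 * ((1 + ω) / 6))))) = 0 := by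
    simpa [Fin.sum_univ_succ, middleProjection, LinearMap.funLeft, complementGenerators, μ]
      using congrFun hf 2
  obtain ⟨ha₁, hb₁⟩ : f 0 - f 2 = 0 ∧ -f 0 - f 1 + f 2 + f 5 = 0 :=
    int_eq_zero_of_add_mul_eq_zero omega_notMem_range_ratCast
      (by push_cast; linear_combination 6 * h₁)
  obtain ⟨ha₂, hb₂⟩ : -3 * f 1 + f 5 = 0 ∧ 3 * (-f 0 + f 1 - f 2) + f 5 = 0 :=
    int_eq_zero_of_add_mul_eq_zero omega_notMem_range_ratCast
      (by push_cast; linear_combination 18 * h₂)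
  obtain ⟨ha₃, hb₃⟩ : -f 1 + 2 * f 3 + f 5 = 0 ∧ -f 0 + f 1 - f 2 - 2 * f 4 + f 5 = 0 :=
    int_eq_zero_of_add_mul_eq_zero omega_notMem_range_ratCast
      (by push_cast; linear_combination 6 * h₃)
  intro i
  fin_cases i <;> dsimp only [Fin.reduceFinMk] <;> omega

lemma span_xiGenerators_le_ker_middleProjection (θ : ℝ) :
    span ℤ (Set.range (xiGenerators θ)) ≤ LinearMap.ker middleProjection := by
  rw [span_le, Set.range_subset_iff]
  intro i
  ext j
  fin_cases i <;> fin_cases j <;> rfl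

lemma disjoint_span_xiGenerators_span_complementGenerators (θ : ℝ) :
    Disjoint (span ℤ (Set.range (xiGenerators θ)))
      (span ℤ (Set.range (complementGenerators θ))) :=
  have hli := linearIndependent_middleProjection_comp_complementGenerators θ
  (range_ker_disjoint hli).symm.mono_left (span_xiGenerators_le_ker_middleProjection θ)

lemma xi_one_eq_mu_one_add (θ : ℝ) : ξ'' θ 1 = μ θ 1 + (μ θ 3 + μ θ 5) := by
  ext k
  fin_cases k <;> simp [ξ'', μ] <;> ring

lemma xi_five_eq_mu_four_add (θ : ℝ) :
    ξ'' θ 5 = μ θ 4 + ((2 : ℤ) • μ θ 2 + (2 : ℤ) • μ θ 3 + μ θ 5 - μ θ 6 + μ θ 7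
      - (2 : ℤ) • μ θ 8 + (3 : ℤ) • μ θ 9) := by
  ext k
  fin_cases k <;> simp [ξ'', μ] <;> ring

section MemIff

variable {θ : ℝ} {S : Submodule ℤ (Fin 6 → ℂ)}

lemma xi_one_mem_iff_mu_one_mem (hS : ∀ i, complementGenerators θ i ∈ S) :
    ξ'' θ 1 ∈ S ↔ μ θ 1 ∈ S := by
  rw [xi_one_eq_mu_one_add]
  exact add_mem_cancel_right (add_mem (hS 1) (hS 2))

lemma xi_five_mem_iff_mu_four_mem (hS : ∀ i, complementGenerators θ i ∈ S) (h₈ : μ θ 8 ∈ S) :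
    ξ'' θ 5 ∈ S ↔ μ θ 4 ∈ S := by
  rw [xi_five_eq_mu_four_add]
  have h₂ : μ θ 2 ∈ S := hS 0
  have h₃ : μ θ 3 ∈ S := hS 1
  have h₅ : μ θ 5 ∈ S := hS 2
  have h₆ : μ θ 6 ∈ S := hS 3
  have h₇ : μ θ 7 ∈ S := hS 4
  have h₉ : μ θ 9 ∈ S := hS 5
  refine add_mem_cancel_right ?_
  aesop (config := { enableSimp := false })

end MemIff

lemma span_xiGenerators_sup_span_complementGenerators (θ : ℝ) :
    span ℤ (Set.range (xiGenerators θ)) ⊔ span ℤ (Set.range (complementGenerators θ)) =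
      span ℤ (Set.range (μ θ)) := by
  refine eq_of_forall_ge_iff fun S => ?_
  simp only [sup_le_iff, span_le, Set.range_subset_iff, SetLike.mem_coe]
  -- `ξ'' θ 0 = μ θ 0` and `ξ'' θ 2 = μ θ 8` hold definitionally
  constructor
  · rintro ⟨hξ, hc⟩ i
    have h₈ : μ θ 8 ∈ S := hξ 2
    fin_cases i
    exacts [hξ 0, (xi_one_mem_iff_mu_one_mem hc).mp (hξ 1), hc 0, hc 1,
      (xi_five_mem_iff_mu_four_mem hc h₈).mp (hξ 3), hc 2, hc 3, hc 4, h₈, hc 5]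
  · intro hμ
    have hc (i : Fin 6) : complementGenerators θ i ∈ S := by
      fin_cases i
      exacts [hμ 2, hμ 3, hμ 5, hμ 6, hμ 7, hμ 9]
    refine ⟨fun i => ?_, hc⟩
    fin_cases i
    exacts [hμ 0, (xi_one_mem_iff_mu_one_mem hc).mpr (hμ 1), hμ 8,
      (xi_five_mem_iff_mu_four_mem hc (hμ 8)).mpr (hμ 4)]

/-- The ℤ-submodule of ℂ⁶ generated by `{ξ₁″, ξ₂″, ξ₃″, ξ₆″}` is free
of rank 4 and is a direct summand of the ℤ-submodule generated by `{μ₁, …, μ₁₀}`. -/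
theorem xi_doubleprime_span_free_and_direct_summand (θ : ℝ) (hθ : Irrational θ) :
    Module.Free ℤ (Submodule.span ℤ {ξ'' θ 0, ξ'' θ 1, ξ'' θ 2, ξ'' θ 5}) ∧
    Module.finrank ℤ (Submodule.span ℤ {ξ'' θ 0, ξ'' θ 1, ξ'' θ 2, ξ'' θ 5}) = 4 ∧
    Submodule.span ℤ {ξ'' θ 0, ξ'' θ 1, ξ'' θ 2, ξ'' θ 5}
      ≤ Submodule.span ℤ (Set.range (μ θ)) ∧
    ∃ P : Submodule ℤ (Fin 6 → ℂ),
      P ≤ Submodule.span ℤ (Set.range (μ θ)) ∧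
      Submodule.span ℤ {ξ'' θ 0, ξ'' θ 1, ξ'' θ 2, ξ'' θ 5} ⊓ P = ⊥ ∧
      Submodule.span ℤ {ξ'' θ 0, ξ'' θ 1, ξ'' θ 2, ξ'' θ 5} ⊔ P
        = Submodule.span ℤ (Set.range (μ θ)) := by
  rw [← range_xiGenerators]
  have hli := linearIndependent_xiGenerators hθ
  have hsup := span_xiGenerators_sup_span_complementGenerators θ
  refine ⟨.of_basis (.span hli), ?_, hsup ▸ le_sup_left,
    span ℤ (Set.range (complementGenerators θ)), hsup ▸ le_sup_right,
    (disjoint_span_xiGenerators_span_complementGenerators θ).eq_bot, hsup⟩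
  rw [finrank_span_eq_card hli, Fintype.card_fin]
end
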